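/- arXiv:math/9801043 — 2 statements merged into one kernel-verified Lean document; each statement's English description precedes it below -/
import Mathlib

section
/- Fix an integer N ≥ 1 and a field F of characteristic 0. Let h, u ∈ F satisfy u ≠ 0, u − h/N ≠ 0, u² − h² ≠ 0, u + Nh ≠ 0, and u + Nh − h/N ≠ 0. Then the rational R-matrix R(u) is invertible, its partial transpose (R(u)⁻¹)^{t₁} is invertible, and the crossing symmetry identity holds: (((R(u)⁻¹)^{t₁})⁻¹)^{t₁} = g(u) · R(u + Nh), where g(u) = (u² − h²)(u + Nh − h/N) / (u · (u − h/N) · (u + Nh)). The same identity holds with the partial transpose t₂ in place of t₁: (((R(u)⁻¹)^{t₂})⁻¹)^{t₂} = g(u) · R(u + Nh). -/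
/- STATEMENT 3: Crossing symmetry of the rational R-matrix:
(((R(u)⁻¹)^{t₁})⁻¹)^{t₁} = g(u) · R(u + Nh) with
g(u) = (u² − h²)(u + Nh − h/N) / (u (u − h/N) (u + Nh)), and likewise for t₂. -/

noncomputable section

/-- The flip (permutation) matrix `P` on `F^N ⊗ F^N`: `P_{(i,j),(k,l)} = δ_{il} δ_{jk}`. -/
def flipMat (N : ℕ) (F : Type*) [Field F] :
    Matrix (Fin N × Fin N) (Fin N × Fin N) F :=
  fun p q => if p.1 = q.2 ∧ p.2 = q.1 then 1 else 0

/-- The rational R-matrix of the paper: `R(u) = (u − h/N)⁻¹ • (u·1 − h·P)`. -/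
def Rrat (N : ℕ) (F : Type*) [Field F] (h u : F) :
    Matrix (Fin N × Fin N) (Fin N × Fin N) F :=
  (u - h / (N : F))⁻¹ • (u • (1 : Matrix (Fin N × Fin N) (Fin N × Fin N) F) - h • flipMat N F)

/-- Partial transpose in the first tensor factor: `(M^{t₁})_{(i,j),(k,l)} = M_{(k,j),(i,l)}`. -/
def pt1 (N : ℕ) (F : Type*) [Field F] (M : Matrix (Fin N × Fin N) (Fin N × Fin N) F) :
    Matrix (Fin N × Fin N) (Fin N × Fin N) F :=
  fun p q => M (q.1, p.2) (p.1, q.2)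

/-- Partial transpose in the second tensor factor: `(M^{t₂})_{(i,j),(k,l)} = M_{(i,l),(k,j)}`. -/
def pt2 (N : ℕ) (F : Type*) [Field F] (M : Matrix (Fin N × Fin N) (Fin N × Fin N) F) :
    Matrix (Fin N × Fin N) (Fin N × Fin N) F :=
  fun p q => M (p.1, q.2) (q.1, p.2)

/-- The partial transpose of the flip. -/
def capMat (N : ℕ) (F : Type*) [Field F] :
    Matrix (Fin N × Fin N) (Fin N × Fin N) F :=
  fun p q => if p.1 = p.2 ∧ q.1 = q.2 then 1 else 0

lemma flip_sq (N : ℕ) (F : Type*) [Field F] : flipMat N F * flipMat N F = 1 := by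
  ext ⟨i, j⟩ ⟨k, l⟩
  rw [Matrix.mul_apply, Finset.sum_eq_single (j, i)]
  · simp only [flipMat, Matrix.one_apply, Prod.mk.injEq]
    by_cases a : i = k <;> by_cases b : j = l <;> simp [a, b]
  · rintro ⟨a, b⟩ - hne
    have : ¬ (i = b ∧ j = a) := by
      rintro ⟨rfl, rfl⟩
      exact hne rfl
    simp [flipMat, this]
  · simp

lemma cap_sq (N : ℕ) (F : Type*) [Field F] :
    capMat N F * capMat N F = (N : F) • capMat N F := by
  ext ⟨i, j⟩ ⟨k, l⟩
  rw [Matrix.mul_apply, Fintype.sum_prod_type]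
  by_cases a : i = j <;> by_cases b : k = l <;> simp [capMat, a, b]

lemma pt1_comb (N : ℕ) (F : Type*) [Field F] (a b : F) :
    pt1 N F (a • 1 + b • flipMat N F) = a • 1 + b • capMat N F := by
  ext ⟨i, j⟩ ⟨k, l⟩
  simp only [pt1, flipMat, capMat, Matrix.add_apply, Matrix.smul_apply, Matrix.one_apply,
    Prod.mk.injEq]
  simp only [eq_comm, and_comm]

lemma pt2_comb (N : ℕ) (F : Type*) [Field F] (a b : F) :
    pt2 N F (a • 1 + b • flipMat N F) = a • 1 + b • capMat N F := by
  ext ⟨i, j⟩ ⟨k, l⟩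
  simp only [pt2, flipMat, capMat, Matrix.add_apply, Matrix.smul_apply, Matrix.one_apply,
    Prod.mk.injEq]
  simp only [eq_comm]

lemma pt1_cap (N : ℕ) (F : Type*) [Field F] (a b : F) :
    pt1 N F (a • 1 + b • capMat N F) = a • 1 + b • flipMat N F := by
  rw [← pt1_comb]; rfl

lemma pt2_cap (N : ℕ) (F : Type*) [Field F] (a b : F) :
    pt2 N F (a • 1 + b • capMat N F) = a • 1 + b • flipMat N F := by
  rw [← pt2_comb]; rfl

theorem rational_R_matrix_crossing_symmetry
    (N : ℕ) (hN : 1 ≤ N) (F : Type*) [Field F] [CharZero F]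
    (h u : F)
    (h0 : u ≠ 0)
    (h1 : u - h / (N : F) ≠ 0)
    (h2 : u ^ 2 - h ^ 2 ≠ 0)
    (h3 : u + (N : F) * h ≠ 0)
    (h4 : u + (N : F) * h - h / (N : F) ≠ 0) :
    IsUnit (Rrat N F h u) ∧
      IsUnit (pt1 N F (Rrat N F h u)⁻¹) ∧
      pt1 N F (pt1 N F (Rrat N F h u)⁻¹)⁻¹ =
        ((u ^ 2 - h ^ 2) * (u + (N : F) * h - h / (N : F)) /
            (u * (u - h / (N : F)) * (u + (N : F) * h))) •
          Rrat N F h (u + (N : F) * h) ∧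
      IsUnit (pt2 N F (Rrat N F h u)⁻¹) ∧
      pt2 N F (pt2 N F (Rrat N F h u)⁻¹)⁻¹ =
        ((u ^ 2 - h ^ 2) * (u + (N : F) * h - h / (N : F)) /
            (u * (u - h / (N : F)) * (u + (N : F) * h))) •
          Rrat N F h (u + (N : F) * h) := by
  have hR : ∀ v : F, Rrat N F h v = (v / (v - h / (N : F))) • 1 +
      (-h / (v - h / (N : F))) • flipMat N F := by
    intro v
    rw [Rrat, smul_sub, smul_smul, smul_smul, sub_eq_add_neg, ← neg_smul]
    congr 2 <;> ring
  have h3c : u + h * (N : F) ≠ 0 := by rwa [mul_comm h]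
  generalize hd : u - h / (N : F) = d at *
  generalize he : u + (N : F) * h - h / (N : F) = e at *
  have m1 : Rrat N F h u * ((u * d / (u ^ 2 - h ^ 2)) • 1 +
      (h * d / (u ^ 2 - h ^ 2)) • flipMat N F) = 1 := by
    rw [hR, hd]
    simp only [add_mul, mul_add, smul_mul_smul_comm, flip_sq, one_mul, mul_one]
    have e1 : u / d * (u * d / (u ^ 2 - h ^ 2)) + -h / d * (h * d / (u ^ 2 - h ^ 2)) = 1 := by
      field_simp
      try ring
    have e2 : u / d * (h * d / (u ^ 2 - h ^ 2)) + -h / d * (u * d / (u ^ 2 - h ^ 2)) = 0 := by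
      field_simp
      try ring
    linear_combination (norm := module) e1 • (1 : Matrix (Fin N × Fin N) (Fin N × Fin N) F) +
      e2 • flipMat N F
  have m2 : ((u * d / (u ^ 2 - h ^ 2)) • (1 : Matrix (Fin N × Fin N) (Fin N × Fin N) F) +
      (h * d / (u ^ 2 - h ^ 2)) • capMat N F) *
      (((u ^ 2 - h ^ 2) / (d * u)) • 1 +
        (-h * (u ^ 2 - h ^ 2) / (d * u * (u + (N : F) * h))) • capMat N F) = 1 := by
    simp only [add_mul, mul_add, smul_mul_smul_comm, cap_sq, one_mul, mul_one, smul_smul]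
    have e1 : u * d / (u ^ 2 - h ^ 2) * ((u ^ 2 - h ^ 2) / (d * u)) = 1 := by
      field_simp
    rw [e1, one_smul, add_assoc, ← add_smul, ← add_smul]
    convert add_zero _
    convert zero_smul F _
    field_simp
    try ring
  have g : ((u ^ 2 - h ^ 2) / (d * u)) • 1 +
        (-h * (u ^ 2 - h ^ 2) / (d * u * (u + (N : F) * h))) • flipMat N F =
      ((u ^ 2 - h ^ 2) * e / (u * d * (u + (N : F) * h))) • Rrat N F h (u + (N : F) * h) := by
    rw [hR, he, smul_add, smul_smul, smul_smul]
    congr 2 <;> field_simp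
  rw [Matrix.inv_eq_right_inv m1, pt1_comb, pt2_comb, Matrix.inv_eq_right_inv m2,
    pt1_cap, pt2_cap, g]
  exact ⟨IsUnit.of_mul_eq_one _ m1, IsUnit.of_mul_eq_one _ m2, rfl,
    IsUnit.of_mul_eq_one _ m2, rfl⟩
end
end

section
/- Let k be a field, A a Hopf algebra over k with bijective antipode S, B ⊆ A a Hopf subalgebra (a subalgebra with Δ(B) ⊆ B⊗B, S(B) ⊆ B, S⁻¹(B) ⊆ B), and q : A → A' a surjective homomorphism of Hopf algebras onto a Hopf algebra A'. Let V be a (B,A,ker q)-dimodule: a B-module with an A'-comodule structure p* (written p*(v) = Σ v₍₋₁₎ ⊗ v₍₀₎) satisfying p*(b·v) = Σ q(b₍₃₎) v₍₋₁₎ q(S⁻¹(b₍₁₎)) ⊗ b₍₂₎·v₍₀₎ for all b ∈ B, v ∈ V. Let A ⊗_B V be the quotient of A ⊗_k V by the subspace spanned by all a b ⊗ v − a ⊗ b·v (a ∈ A, b ∈ B, v ∈ V), regarded as an A-module via left multiplication. Then there exists a unique A'-comodule structure π* on A ⊗_B V such that: (i) π*(1 ⊗ v) = Σ v₍₋₁₎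 ⊗ (1 ⊗ v₍₀₎) for all v ∈ V, and (ii) the compatibility condition holds: π*(a·x) = Σ q(a₍₃₎) x₍₋₁₎ q(S⁻¹(a₍₁₎)) ⊗ a₍₂₎·x₍₀₎ for all a ∈ A and x ∈ A ⊗_B V. In particular A ⊗_B V is an (A,A,ker q)-dimodule. -/
/- STATEMENT 5 (Proposition 3.2 of the paper): existence and uniqueness of the induced
dimodule structure on A ⊗_B V.

Conventions: `A` is a Hopf algebra over a field `k` with bijective antipode `S`
(inverse `Sinv`); `B ⊆ A` is a Hopf subalgebra (a subalgebra with `Δ(B) ⊆ B ⊗ B`,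
`S(B) ⊆ B`, `S⁻¹(B) ⊆ B`); `q : A → A'` is a surjective Hopf algebra homomorphism,
realizing `A/I` with `I = ker q`.  A module structure is a unital associative action
`act : B ⊗ X → X`; a comodule structure over `A'` (paper's convention) is
`ρ : X → A' ⊗ X` with `(1 ⊗ ρ) ∘ ρ = (Δ'^op ⊗ 1) ∘ ρ` and `(ε' ⊗ 1) ∘ ρ = id`.
The dimodule compatibility `π*(b·x) = Σ q(b₍₃₎) x₍₋₁₎ q(S⁻¹(b₍₁₎)) ⊗ b₍₂₎·x₍₀₎`
is encoded by `ydRHS` below.  `A ⊗_B V` is the quotient of `A ⊗_k V` by the subspace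
spanned by all `a b ⊗ v − a ⊗ b·v` (this spanning set is stable under left
multiplication by `A`, so the `A`-span used below is the same subspace), with
`A` acting by left multiplication. -/

noncomputable section

open TensorProduct

section Defs

variable (k : Type*) [Field k]
variable (Bc A' V : Type*) [Ring Bc] [Algebra k Bc] [Ring A'] [Algebra k A']
  [AddCommGroup V] [Module k V]

/-- Triple multiplication `m₃ : A' ⊗ (A' ⊗ A') → A'`. -/
def mul3 : A' ⊗[k] (A' ⊗[k] A') →ₗ[k] A' :=
  LinearMap.mul' k A' ∘ₗ TensorProduct.map LinearMap.id (LinearMap.mul' k A')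

/-- The right-hand side of the dimodule compatibility condition:
given `Δ₃ : b ↦ b₍₁₎ ⊗ (b₍₂₎ ⊗ b₍₃₎)`, maps `b ⊗ x` to
`Σ g3(b₍₃₎) · x₍₋₁₎ · g1(b₍₁₎) ⊗ b₍₂₎ · x₍₀₎`. -/
def ydRHS (Δ₃ : Bc →ₗ[k] Bc ⊗[k] (Bc ⊗[k] Bc)) (g1 g3 : Bc →ₗ[k] A')
    (ρ : V →ₗ[k] A' ⊗[k] V) (act : Bc ⊗[k] V →ₗ[k] V) :
    Bc ⊗[k] V →ₗ[k] A' ⊗[k] V :=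
  TensorProduct.map (mul3 k A') act
    ∘ₗ TensorProduct.map
        (TensorProduct.map LinearMap.id (TensorProduct.comm k A' A').toLinearMap
          ∘ₗ (TensorProduct.assoc k A' A' A').toLinearMap) LinearMap.id
    ∘ₗ (tensorTensorTensorComm k (A' ⊗[k] A') Bc A' V).toLinearMap
    ∘ₗ TensorProduct.map
        (TensorProduct.map (TensorProduct.comm k A' A').toLinearMap LinearMap.id
          ∘ₗ (TensorProduct.assoc k A' A' Bc).symm.toLinearMap
          ∘ₗ TensorProduct.map LinearMap.id (TensorProduct.comm k Bc A').toLinearMap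
          ∘ₗ TensorProduct.map g1 (TensorProduct.map LinearMap.id g3)) LinearMap.id
    ∘ₗ TensorProduct.map Δ₃ ρ

/-- `act : B ⊗ X → X` is a unital associative action. -/
def IsModAction (act : Bc ⊗[k] V →ₗ[k] V) : Prop :=
  (∀ x : V, act ((1 : Bc) ⊗ₜ[k] x) = x) ∧
    act ∘ₗ TensorProduct.map (LinearMap.mul' k Bc) (LinearMap.id : V →ₗ[k] V) =
      act ∘ₗ TensorProduct.map LinearMap.id act ∘ₗ (TensorProduct.assoc k Bc Bc V).toLinearMap

end Defs

section Comod

variable (k : Type*) [Field k]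
variable (A' V : Type*) [Ring A'] [Bialgebra k A'] [AddCommGroup V] [Module k V]

/-- `ρ : V → A' ⊗ V` is a comodule structure in the paper's convention:
coassociative with respect to the *opposite* comultiplication, and counital. -/
def IsComod (ρ : V →ₗ[k] A' ⊗[k] V) : Prop :=
  (TensorProduct.map LinearMap.id ρ ∘ₗ ρ =
      (TensorProduct.assoc k A' A' V).toLinearMap
        ∘ₗ TensorProduct.map
            ((TensorProduct.comm k A' A').toLinearMap ∘ₗ Coalgebra.comul (R := k))
            LinearMap.id
        ∘ₗ ρ) ∧
    (TensorProduct.lid k V).toLinearMap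
        ∘ₗ TensorProduct.map (Coalgebra.counit (R := k)) LinearMap.id ∘ₗ ρ =
      LinearMap.id

end Comod

section Induced

variable (k A : Type*) [Field k] [Ring A] [HopfAlgebra k A]
variable (V : Type*) [AddCommGroup V] [Module k V]
variable (B : Subalgebra k A)
variable (actV : ↥B ⊗[k] V →ₗ[k] V)

/-- Iterated comultiplication `Δ₃ : a ↦ a₍₁₎ ⊗ (a₍₂₎ ⊗ a₍₃₎)` of a bialgebra. -/
def comul3 : A →ₗ[k] A ⊗[k] (A ⊗[k] A) :=
  TensorProduct.map LinearMap.id (Coalgebra.comul (R := k)) ∘ₗ Coalgebra.comul (R := k)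

/-- The set of relations `a b ⊗ v − a ⊗ b·v` (`a ∈ A`, `b ∈ B`, `v ∈ V`). -/
def indSet : Set (A ⊗[k] V) :=
  {x | ∃ (a : A) (b : B) (v : V), x = (a * (b : A)) ⊗ₜ[k] v - a ⊗ₜ[k] actV (b ⊗ₜ[k] v)}

/-- The subspace of `A ⊗ V` spanned by the relations `a b ⊗ v − a ⊗ b·v`.  (Since this
set of generators is stable under left multiplication by `A`, its `A`-span coincides
with its `k`-span, and taking the `A`-span makes the quotient an `A`-module.) -/
def indSub : Submodule A (A ⊗[k] V) := Submodule.span A (indSet k A V B actV)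

/-- `A ⊗_B V`, the quotient of `A ⊗_k V` by the span of `a b ⊗ v − a ⊗ b·v`. -/
abbrev IndMod := (A ⊗[k] V) ⧸ indSub k A V B actV

/-- The action of `A` on `A ⊗_B V` by left multiplication, as a map
`A ⊗ (A ⊗_B V) → A ⊗_B V`. -/
def indAct : A ⊗[k] IndMod k A V B actV →ₗ[k] IndMod k A V B actV :=
  TensorProduct.lift (LinearMap.mk₂ k (fun a x => a • x)
    (fun a a' x => add_smul a a' x)
    (fun c a x => smul_assoc c a x)
    (fun a x y => smul_add a x y)
    (fun s m x => by
      show m • (s • x) = s • (m • x)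
      rw [← algebraMap_smul A s x, ← mul_smul, ← Algebra.commutes, mul_smul,
        algebraMap_smul]))

/-- The canonical map `V → A ⊗_B V`, `v ↦ [1 ⊗ v]`. -/
def indIncl : V →ₗ[k] IndMod k A V B actV :=
  (LinearMap.restrictScalars k (indSub k A V B actV).mkQ) ∘ₗ (TensorProduct.mk k A V 1)

end Induced

section Helpers

open Coalgebra

section Q
variable {k : Type*} [Field k]
variable {C C2 C3 A' X Y : Type*} [AddCommGroup C] [Module k C] [AddCommGroup C2] [Module k C2]
  [AddCommGroup C3] [Module k C3] [Ring A'] [Algebra k A']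
  [AddCommGroup X] [Module k X] [AddCommGroup Y] [Module k Y]

/-- `sandL r l x = l * (x * r)`. -/
def sandL : A' →ₗ[k] A' →ₗ[k] (A' →ₗ[k] A') :=
  LinearMap.mk₂ k (fun r l => LinearMap.mulLeft k l ∘ₗ LinearMap.mulRight k r)
    (fun r r' l => by ext; simp [mul_add])
    (fun c r l => by ext; simp)
    (fun r l l' => by ext; simp [add_mul])
    (fun c r l => by ext; simp)

@[simp] lemma sandL_apply (r l x : A') : sandL (k := k) r l x = l * (x * r) := rfl

/-- `c₁ ⊗ (c₂ ⊗ c₃) ↦ (x ⊗ y ↦ g₃(c₃) x g₁(c₁) ⊗ φ(c₂) y)`. -/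
def QQ (g1 : C →ₗ[k] A') (g3 : C3 →ₗ[k] A') (φ : C2 →ₗ[k] (X →ₗ[k] Y)) :
    C ⊗[k] (C2 ⊗[k] C3) →ₗ[k] (A' ⊗[k] X →ₗ[k] A' ⊗[k] Y) :=
  TensorProduct.homTensorHomMap (RingHom.id k) A' X A' Y
    ∘ₗ TensorProduct.map (TensorProduct.lift sandL ∘ₗ TensorProduct.map g1 g3) φ
    ∘ₗ (TensorProduct.assoc k C C3 C2).symm.toLinearMap
    ∘ₗ TensorProduct.map LinearMap.id (TensorProduct.comm k C2 C3).toLinearMap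

@[simp] lemma QQ_tmul (g1 : C →ₗ[k] A') (g3 : C3 →ₗ[k] A')
    (φ : C2 →ₗ[k] (X →ₗ[k] Y)) (a : C) (b : C2) (c : C3) :
    QQ g1 g3 φ (a ⊗ₜ (b ⊗ₜ c)) = TensorProduct.map (sandL (g1 a) (g3 c)) (φ b) := by
  simp [QQ]

end Q

lemma ydRHS_eq {k : Type*} [Field k] {C A' X : Type*} [Ring C] [Algebra k C] [Ring A']
    [Algebra k A'] [AddCommGroup X] [Module k X]
    (Δ₃ : C →ₗ[k] C ⊗[k] (C ⊗[k] C)) (g1 g3 : C →ₗ[k] A')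
    (ρ : X →ₗ[k] A' ⊗[k] X) (act : C ⊗[k] X →ₗ[k] X) (b : C) (x : X) :
    ydRHS k C A' X Δ₃ g1 g3 ρ act (b ⊗ₜ x) =
      QQ g1 g3 (TensorProduct.curry act) (Δ₃ b) (ρ x) := by
  simp only [ydRHS, LinearMap.comp_apply, TensorProduct.map_tmul]
  generalize Δ₃ b = t
  generalize ρ x = y
  induction t with
  | zero => simp
  | add t s ht hs => simp only [map_add, TensorProduct.add_tmul, ht, hs, LinearMap.add_apply]
  | tmul a t =>
    induction t with
    | zero => simp
    | add t s ht hs =>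
      simp only [map_add, TensorProduct.add_tmul, TensorProduct.tmul_add, ht, hs,
        LinearMap.add_apply]
    | tmul c d =>
      induction y with
      | zero => simp
      | add t s ht hs => simp only [map_add, TensorProduct.tmul_add, ht, hs]
      | tmul u v => simp [mul3]

section Anti
variable {k A : Type*} [Field k] [Ring A] [HopfAlgebra k A]

lemma coassoc4 : (TensorProduct.assoc k A (A ⊗[k] A) A).toLinearMap ∘ₗ
     TensorProduct.map (TensorProduct.assoc k A A A).toLinearMap LinearMap.id ∘ₗ
     (TensorProduct.assoc k (A ⊗[k] A) A A).symm.toLinearMap ∘ₗ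
    TensorProduct.map (comul (R := k) (A := A)) (comul (R := k) (A := A)) ∘ₗ comul (R := k) =
    TensorProduct.map LinearMap.id (TensorProduct.map comul LinearMap.id ∘ₗ comul)
       ∘ₗ comul (R := k) := by
  simp only [coassoc_simps]

/-- reassociation -/
def re5 : (A ⊗[k] A) ⊗[k] (A ⊗[k] (A ⊗[k] A)) →ₗ[k] A ⊗[k] ((A ⊗[k] (A ⊗[k] A)) ⊗[k] A) :=
  TensorProduct.map LinearMap.id ((TensorProduct.map (TensorProduct.assoc k A A A).toLinearMap LinearMap.id) ∘ₗ
    (TensorProduct.assoc k (A ⊗[k] A) A A).symm.toLinearMap ∘ₗ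
    (TensorProduct.assoc k A A (A ⊗[k] A)).symm.toLinearMap) ∘ₗ
  (TensorProduct.assoc k A A (A ⊗[k] (A ⊗[k] A))).toLinearMap

@[simp] lemma re5_tmul (x y z u w : A) : re5 (k := k) ((x ⊗ₜ y) ⊗ₜ (z ⊗ₜ (u ⊗ₜ w))) =
   x ⊗ₜ ((y ⊗ₜ (z ⊗ₜ u)) ⊗ₜ w) := by simp [re5]

lemma coassoc5 : re5 ∘ₗ TensorProduct.map comul (TensorProduct.map LinearMap.id comul) ∘ₗ
     comul3 k A =
    TensorProduct.map LinearMap.id (TensorProduct.map (comul3 k A) LinearMap.id) ∘ₗ comul3 k A := by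
  simp only [re5, comul3, coassoc_simps]

lemma comul_antipode' : (comul (R := k) (A := A)) ∘ₗ HopfAlgebra.antipode k =
   TensorProduct.map (HopfAlgebra.antipode k) (HopfAlgebra.antipode k) ∘ₗ
     (TensorProduct.comm k A A).toLinearMap ∘ₗ comul (R := k) := by
  symm
  apply WithConv.toConv_injective
  refine left_inv_eq_right_inv (a := WithConv.toConv (comul (R := k) (A := A))) ?_
    LinearMap.comul_right_inv
  ext a
  have h4 := LinearMap.congr_fun (coassoc4 (k := k) (A := A)) a
  simp only [LinearMap.comp_apply] at h4
  set mS : A ⊗[k] A →ₗ[k] A := LinearMap.mul' k A ∘ₗ (HopfAlgebra.antipode k).rTensor A with hmS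
  have hm : ∀ y : A, mS (comul y) = algebraMap k A (counit y) := fun y =>
    HopfAlgebra.mul_antipode_rTensor_comul_apply y
  set K : A ⊗[k] ((A ⊗[k] A) ⊗[k] A) →ₗ[k] A ⊗[k] A :=
    TensorProduct.map mS mS ∘ₗ (TensorProduct.leftComm k A (A ⊗[k] A) A).toLinearMap with hK
  have h1 : ∀ t : (A ⊗[k] A) ⊗[k] (A ⊗[k] A),
      LinearMap.mul' k (A ⊗[k] A) (TensorProduct.map
        (TensorProduct.map (HopfAlgebra.antipode k) (HopfAlgebra.antipode k) ∘ₗ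
          (TensorProduct.comm k A A).toLinearMap) LinearMap.id t) =
      K ((TensorProduct.assoc k A (A ⊗[k] A) A).toLinearMap
        (TensorProduct.map (TensorProduct.assoc k A A A).toLinearMap LinearMap.id
          ((TensorProduct.assoc k (A ⊗[k] A) A A).symm.toLinearMap t))) := by
    intro t
    rw [← LinearMap.comp_apply, ← LinearMap.comp_apply, ← LinearMap.comp_apply,
      ← LinearMap.comp_apply]
    congr 1
    ext x y z w
    simp [hK, hmS]
  have h2 : ∀ (x : A) (u : A ⊗[k] A),
      K (x ⊗ₜ[k] TensorProduct.map comul LinearMap.id u) =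
        1 ⊗ₜ[k] mS (x ⊗ₜ[k] TensorProduct.lid k A (TensorProduct.map counit LinearMap.id u)) := by
    intro x u
    induction u with
    | zero => simp
    | add t s ht hs => simp only [map_add, TensorProduct.tmul_add, ht, hs]
    | tmul y w =>
      simp [hK, hm, Algebra.algebraMap_eq_smul_one, TensorProduct.smul_tmul]
  have h3 : ∀ t : A ⊗[k] A,
      K (TensorProduct.map LinearMap.id (TensorProduct.map comul LinearMap.id ∘ₗ comul) t) =
        1 ⊗ₜ[k] mS t := by
    intro t
    induction t with
    | zero => simp
    | add t s ht hs => simp only [map_add, TensorProduct.tmul_add, ht, hs]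
    | tmul y w =>
      change K (y ⊗ₜ[k] TensorProduct.map comul LinearMap.id (comul w)) = _
      rw [h2]
      have := Coalgebra.rTensor_counit_comul (R := k) w
      rw [LinearMap.rTensor] at this
      rw [this]
      simp
  have h5 := h1 (TensorProduct.map comul comul (comul a))
  rw [h4, h3, hm] at h5
  rw [LinearMap.convMul_apply, LinearMap.convOne_apply]
  simp only
  rw [TensorProduct.map_map, LinearMap.id_comp, LinearMap.comp_assoc] at h5
  rw [h5]
  simp [Algebra.algebraMap_eq_smul_one, Algebra.TensorProduct.one_def]

end Anti

section Main
variable {k A A' W : Type*} [Field k] [Ring A] [HopfAlgebra k A] [Ring A'] [HopfAlgebra k A']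
  [AddCommGroup W] [Module k W]

lemma comul3_mul (a b : A) : comul3 k A (a * b) = comul3 k A a * comul3 k A b := by
  have : comul3 k A = ((Algebra.TensorProduct.map (AlgHom.id k A)
    (Bialgebra.comulAlgHom k A)).comp (Bialgebra.comulAlgHom k A)).toLinearMap := by
    ext a; rfl
  rw [this]
  simp only [AlgHom.toLinearMap_apply, map_mul]

lemma comul3_one : comul3 k A 1 = 1 ⊗ₜ (1 ⊗ₜ 1) := by
  simp [comul3, Algebra.TensorProduct.one_def]

lemma QQ_mul (g1 g3 : A →ₗ[k] A') (φ : A →ₗ[k] (W →ₗ[k] W))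
    (h1 : ∀ a b, g1 (a * b) = g1 b * g1 a) (h3 : ∀ a b, g3 (a * b) = g3 a * g3 b)
    (hφ : ∀ a b, φ (a * b) = φ a ∘ₗ φ b) (s t : A ⊗[k] (A ⊗[k] A)) :
    QQ g1 g3 φ (s * t) = QQ g1 g3 φ s ∘ₗ QQ g1 g3 φ t := by
  induction s with
  | zero => simp
  | add s s' hs hs' => simp only [add_mul, map_add, hs, hs', LinearMap.add_comp]
  | tmul a s =>
  induction s with
  | zero => simp
  | add s s' hs hs' => simp only [TensorProduct.tmul_add, add_mul, map_add, hs, hs', LinearMap.add_comp]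
  | tmul b c =>
  induction t with
  | zero => simp
  | add s s' hs hs' => simp only [mul_add, map_add, hs, hs', LinearMap.comp_add]
  | tmul a' s =>
  induction s with
  | zero => simp
  | add s s' hs hs' => simp only [TensorProduct.tmul_add, mul_add, map_add, hs, hs', LinearMap.comp_add]
  | tmul b' c' =>
    simp only [Algebra.TensorProduct.tmul_mul_tmul, QQ_tmul, ← TensorProduct.map_comp, hφ, h1, h3]
    congr 1
    ext x
    simp [mul_assoc]

/-- `Δ'^op ⊗ 1`. -/
def DD : A' ⊗[k] W →ₗ[k] A' ⊗[k] (A' ⊗[k] W) :=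
  (TensorProduct.assoc k A' A' W).toLinearMap ∘ₗ TensorProduct.map
    ((TensorProduct.comm k A' A').toLinearMap ∘ₗ Coalgebra.comul (R := k)) LinearMap.id

lemma DD_QQ (g1 g3 : A →ₗ[k] A') (φ : A →ₗ[k] (W →ₗ[k] W))
    (h1 : ∀ a, comul (R := k) (g1 a) =
      TensorProduct.map g1 g1 (TensorProduct.comm k A A (comul (R := k) a)))
    (h3 : ∀ a, comul (R := k) (g3 a) = TensorProduct.map g3 g3 (comul (R := k) a))
    (t : A ⊗[k] (A ⊗[k] A)) (y : A' ⊗[k] W) :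
    DD (QQ g1 g3 φ t y) = QQ g1 g3 (QQ g1 g3 φ)
      (re5 (TensorProduct.map comul (TensorProduct.map LinearMap.id comul) t)) (DD y) := by
  induction t with
  | zero => simp
  | add s s' hs hs' => simp only [map_add, LinearMap.add_apply, hs, hs']
  | tmul a s =>
  induction s with
  | zero => simp
  | add s s' hs hs' => simp only [TensorProduct.tmul_add, map_add, LinearMap.add_apply, hs, hs']
  | tmul b c =>
  induction y with
  | zero => simp
  | add s s' hs hs' => simp only [map_add, hs, hs']
  | tmul x w =>
    simp only [QQ_tmul, TensorProduct.map_tmul, sandL_apply, DD, LinearMap.comp_apply,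
      Bialgebra.comul_mul, h1, h3, LinearMap.id_apply]
    generalize comul (R := k) a = r
    generalize comul (R := k) c = s
    generalize comul (R := k) x = z
    induction r with
    | zero => simp
    | add s s' hs hs' =>
      simp only [map_add, mul_add, TensorProduct.add_tmul, LinearMap.add_apply, hs, hs']
    | tmul r1 r2 =>
    induction s with
    | zero => simp
    | add s s' hs hs' =>
      simp only [map_add, add_mul, TensorProduct.add_tmul, TensorProduct.tmul_add,
        LinearMap.add_apply, hs, hs']
    | tmul s1 s2 =>
    induction z with
    | zero => simp
    | add s s' hs hs' =>
      simp only [map_add, add_mul, mul_add, TensorProduct.add_tmul, hs, hs']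
    | tmul z1 z2 => simp

lemma counit_QQ (g1 g3 : A →ₗ[k] A') (φ : A →ₗ[k] (W →ₗ[k] W))
    (h1 : ∀ a, counit (R := k) (g1 a) = counit (R := k) a)
    (h3 : ∀ a, counit (R := k) (g3 a) = counit (R := k) a) (a : A) (y : A' ⊗[k] W) :
    TensorProduct.lid k W (TensorProduct.map (counit (R := k)) LinearMap.id
      (QQ g1 g3 φ (comul3 k A a) y)) =
    φ a (TensorProduct.lid k W (TensorProduct.map (counit (R := k)) LinearMap.id y)) := by
  have key : ∀ t : A ⊗[k] (A ⊗[k] A), TensorProduct.lid k W (TensorProduct.map (counit (R := k))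
      LinearMap.id (QQ g1 g3 φ t y)) =
      φ (TensorProduct.lid k A (TensorProduct.map (counit (R := k)) (TensorProduct.rid k A ∘ₗ
        TensorProduct.map LinearMap.id (counit (R := k))) t))
      (TensorProduct.lid k W (TensorProduct.map (counit (R := k)) LinearMap.id y)) := by
    intro t
    induction t with
    | zero => simp
    | add s s' hs hs' => simp only [map_add, LinearMap.add_apply, hs, hs']
    | tmul a s =>
    induction s with
    | zero => simp
    | add s s' hs hs' => simp only [TensorProduct.tmul_add, map_add, LinearMap.add_apply, hs, hs']
    | tmul b c =>
    induction y with
    | zero => simp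
    | add s s' hs hs' => simp only [map_add, hs, hs']
    | tmul x w =>
      simp [h1, h3, smul_smul]
      congr 1
      ring
  rw [key]
  congr 2
  have e1 : (TensorProduct.rid k A).toLinearMap ∘ₗ
      TensorProduct.map LinearMap.id (counit (R := k)) ∘ₗ comul = LinearMap.id := by
    ext x
    have := Coalgebra.lTensor_counit_comul (R := k) x
    rw [LinearMap.lTensor] at this
    simp [this]
  have e2 := Coalgebra.rTensor_counit_comul (R := k) a
  rw [LinearMap.rTensor] at e2
  rw [comul3, ← LinearMap.comp_apply, ← LinearMap.comp_assoc, ← TensorProduct.map_comp,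
    LinearMap.comp_assoc, e1, LinearMap.comp_id, LinearMap.comp_apply, e2]
  simp

lemma map_QQ {C C2 C3 C2' X Y Z X' : Type*} [AddCommGroup C] [Module k C] [AddCommGroup C2]
    [Module k C2] [AddCommGroup C3] [Module k C3] [AddCommGroup C2'] [Module k C2']
    [AddCommGroup X] [Module k X] [AddCommGroup X'] [Module k X']
    [AddCommGroup Y] [Module k Y] [AddCommGroup Z] [Module k Z] 
    {D1 D3 : Type*} [AddCommGroup D1] [Module k D1] [AddCommGroup D3] [Module k D3]
    (g1 : C →ₗ[k] A') (g3 : C3 →ₗ[k] A') (φ : C2 →ₗ[k] (X →ₗ[k] Y))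
    (h1 : D1 →ₗ[k] A') (h3 : D3 →ₗ[k] A') (p1 : C →ₗ[k] D1) (p3 : C3 →ₗ[k] D3)
    (hp1 : h1 ∘ₗ p1 = g1) (hp3 : h3 ∘ₗ p3 = g3)
    (ψ : C2' →ₗ[k] (X' →ₗ[k] Z)) (p : C2 →ₗ[k] C2') (f : Y →ₗ[k] Z) (f' : X →ₗ[k] X')
    (h : ∀ c, f ∘ₗ φ c = ψ (p c) ∘ₗ f') (t : C ⊗[k] (C2 ⊗[k] C3)) (y : A' ⊗[k] X) :
    TensorProduct.map LinearMap.id f (QQ g1 g3 φ t y) =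
      QQ h1 h3 ψ (TensorProduct.map p1 (TensorProduct.map p p3) t)
        (TensorProduct.map LinearMap.id f' y) := by
  subst hp1 hp3
  induction t with
  | zero => simp
  | add s s' hs hs' => simp only [map_add, LinearMap.add_apply, hs, hs']
  | tmul a s =>
  induction s with
  | zero => simp
  | add s s' hs hs' => simp only [TensorProduct.tmul_add, map_add, LinearMap.add_apply, hs, hs']
  | tmul b c =>
  induction y with
  | zero => simp
  | add s s' hs hs' => simp only [map_add, hs, hs']
  | tmul x w =>
    have := LinearMap.congr_fun (h b) w
    simp only [LinearMap.comp_apply] at this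
    simp [this]

end Main

end Helpers

section Helpers2

variable (k A : Type*) [Field k] [Ring A] [HopfAlgebra k A]
variable (V : Type*) [AddCommGroup V] [Module k V]
variable (B : Subalgebra k A)
variable (actV : ↥B ⊗[k] V →ₗ[k] V)

lemma ind_mk (a : A) (v : V) :
    (indSub k A V B actV).mkQ (a ⊗ₜ v) = a • indIncl k A V B actV v := by
  have : a ⊗ₜ[k] v = a • ((1 : A) ⊗ₜ[k] v) := by
    rw [TensorProduct.smul_tmul', smul_eq_mul, mul_one]
  rw [this, map_smul]
  rfl

variable {k A V B actV} in
lemma ind_gen {M : Type*} [AddCommGroup M] [Module k M] {f g : IndMod k A V B actV →ₗ[k] M}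
    (h : ∀ (a : A) v, f (a • indIncl k A V B actV v) = g (a • indIncl k A V B actV v)) :
    f = g := by
  refine LinearMap.ext fun x => ?_
  obtain ⟨t, rfl⟩ := Submodule.mkQ_surjective _ x
  induction t with
  | zero => simp
  | add s s' hs hs' => rw [map_add, map_add, map_add, hs, hs']
  | tmul a v => rw [ind_mk]; exact h a v

end Helpers2

set_option maxHeartbeats 4000000 in
theorem induced_dimodule_exists_unique
    {k A A' V : Type*} [Field k] [Ring A] [HopfAlgebra k A] [Ring A'] [HopfAlgebra k A']
    [AddCommGroup V] [Module k V]
    -- the antipode of A is bijective, with inverse Sinv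
    (Sinv : A →ₗ[k] A)
    (hS1 : Sinv ∘ₗ HopfAlgebra.antipode (R := k) = LinearMap.id)
    (hS2 : HopfAlgebra.antipode (R := k) ∘ₗ Sinv = LinearMap.id)
    -- B is a Hopf subalgebra: Δ(B) ⊆ B ⊗ B (witnessed by ΔB), S(B) ⊆ B, S⁻¹(B) ⊆ B
    (B : Subalgebra k A)
    (ΔB : ↥B →ₗ[k] ↥B ⊗[k] ↥B)
    (hΔB : TensorProduct.map B.val.toLinearMap B.val.toLinearMap ∘ₗ ΔB =
      Coalgebra.comul (R := k) ∘ₗ B.val.toLinearMap)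
    (hSB : ∀ b : B, HopfAlgebra.antipode (R := k) (b : A) ∈ B)
    (hSinvB : ∀ b : B, Sinv (b : A) ∈ B)
    -- q : A → A' is a surjective homomorphism of Hopf algebras
    (q : A →ₐ[k] A') (hq : Function.Surjective q)
    (hqΔ : TensorProduct.map q.toLinearMap q.toLinearMap ∘ₗ Coalgebra.comul (R := k) =
      Coalgebra.comul (R := k) ∘ₗ q.toLinearMap)
    (hqε : Coalgebra.counit (R := k) ∘ₗ q.toLinearMap = Coalgebra.counit (R := k))
    (hqS : HopfAlgebra.antipode (R := k) ∘ₗ q.toLinearMap =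
      q.toLinearMap ∘ₗ HopfAlgebra.antipode (R := k))
    -- V is a (B, A, ker q)-dimodule
    (actV : ↥B ⊗[k] V →ₗ[k] V) (hVmod : IsModAction k (↥B) V actV)
    (ρV : V →ₗ[k] A' ⊗[k] V) (hVcomod : IsComod k A' V ρV)
    (hVcompat : ρV ∘ₗ actV =
      ydRHS k (↥B) A' V (TensorProduct.map LinearMap.id ΔB ∘ₗ ΔB)
        (q.toLinearMap ∘ₗ Sinv ∘ₗ B.val.toLinearMap)
        (q.toLinearMap ∘ₗ B.val.toLinearMap) ρV actV) :
    -- conclusion: A ⊗_B V carries a unique compatible A'-comodule structure,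
    -- making it an (A, A, ker q)-dimodule
    IsModAction k A (IndMod k A V B actV) (indAct k A V B actV) ∧
      ∃! π : IndMod k A V B actV →ₗ[k] A' ⊗[k] IndMod k A V B actV,
        IsComod k A' (IndMod k A V B actV) π ∧
          (∀ v : V, π (indIncl k A V B actV v) =
            TensorProduct.map LinearMap.id (indIncl k A V B actV) (ρV v)) ∧
          π ∘ₗ indAct k A V B actV =
            ydRHS k A A' (IndMod k A V B actV) (comul3 k A)
              (q.toLinearMap ∘ₗ Sinv) q.toLinearMap π (indAct k A V B actV) := by
  -- facts about the inverse antipode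
  have hS1' : ∀ a, Sinv (HopfAlgebra.antipode k a) = a := fun a => LinearMap.congr_fun hS1 a
  have hS2' : ∀ a, HopfAlgebra.antipode k (Sinv a) = a := fun a => LinearMap.congr_fun hS2 a
  have hSone : Sinv 1 = 1 := by
    have := hS1' 1
    rwa [HopfAlgebra.antipode_one] at this
  have hSmul : ∀ a b, Sinv (a * b) = Sinv b * Sinv a := by
    intro a b
    conv_lhs => rw [← hS2' a, ← hS2' b, ← HopfAlgebra.antipode_mul_antidistrib, hS1']
  have hSε : ∀ a, Coalgebra.counit (R := k) (Sinv a) = Coalgebra.counit (R := k) a := by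
    intro a
    conv_rhs => rw [← hS2' a, HopfAlgebra.counit_antipode]
  have hSΔ : ∀ a, Coalgebra.comul (R := k) (Sinv a) = TensorProduct.map Sinv Sinv
      (TensorProduct.comm k A A (Coalgebra.comul (R := k) a)) := by
    intro a
    have h := LinearMap.congr_fun (comul_antipode' (k := k) (A := A)) (Sinv a)
    simp only [LinearMap.comp_apply, hS2'] at h
    rw [h]
    generalize Coalgebra.comul (R := k) (Sinv a) = t
    induction t with
    | zero => simp
    | add s s' hs hs' => simp only [map_add]; rw [← hs, ← hs']
    | tmul x y => simp [hS1']
  set g1 : A →ₗ[k] A' := q.toLinearMap ∘ₗ Sinv with hg1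
  set g3 : A →ₗ[k] A' := q.toLinearMap with hg3
  have g1one : g1 1 = 1 := by change q (Sinv 1) = 1; rw [hSone, map_one]
  have g3one : g3 1 = 1 := by simp [hg3]
  have g1mul : ∀ a b, g1 (a * b) = g1 b * g1 a := by
    intro a b; change q (Sinv (a * b)) = q _ * q _; rw [hSmul, map_mul]
  have g3mul : ∀ a b, g3 (a * b) = g3 a * g3 b := by intro a b; simp [hg3]
  have g3ε : ∀ a, Coalgebra.counit (R := k) (g3 a) = Coalgebra.counit (R := k) a :=
    fun a => LinearMap.congr_fun hqε a
  have g1ε : ∀ a, Coalgebra.counit (R := k) (g1 a) = Coalgebra.counit (R := k) a :=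
    fun a => (g3ε (Sinv a)).trans (hSε a)
  have g3Δ : ∀ a, Coalgebra.comul (R := k) (g3 a) =
      TensorProduct.map g3 g3 (Coalgebra.comul (R := k) a) :=
    fun a => (LinearMap.congr_fun hqΔ a).symm
  have g1Δ : ∀ a, Coalgebra.comul (R := k) (g1 a) =
      TensorProduct.map g1 g1 (TensorProduct.comm k A A (Coalgebra.comul (R := k) a)) := by
    intro a
    refine (g3Δ (Sinv a)).trans ?_
    rw [hSΔ, TensorProduct.map_map]
  -- the module
  set W := IndMod k A V B actV with hW
  set ι : V →ₗ[k] W := indIncl k A V B actV with hι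
  set φ : A →ₗ[k] (W →ₗ[k] W) := TensorProduct.curry (indAct k A V B actV) with hφ
  have φ_apply : ∀ a x, φ a x = a • x := fun a x => rfl
  have φmul : ∀ a b, φ (a * b) = φ a ∘ₗ φ b := by
    intro a b
    refine LinearMap.ext fun x => ?_
    exact mul_smul a b x
  have φone : φ 1 = LinearMap.id := LinearMap.ext fun x => one_smul A x
  have hmk := ind_mk k A V B actV
  have hιB : ∀ (b : B) (v : V), ι (actV (b ⊗ₜ v)) = (b : A) • ι v := by
    intro b v
    refine Eq.trans ?_ (hmk _ _)
    symm
    change (indSub k A V B actV).mkQ _ = (indSub k A V B actV).mkQ ((1 : A) ⊗ₜ[k] _)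
    rw [← sub_eq_zero, ← map_sub, Submodule.mkQ_apply, Submodule.Quotient.mk_eq_zero]
    exact Submodule.subset_span ⟨1, b, v, by rw [one_mul]⟩
  -- the action of `A` on `A' ⊗ W`
  set T : A →ₗ[k] (A' ⊗[k] W →ₗ[k] A' ⊗[k] W) := QQ g1 g3 φ ∘ₗ comul3 k A with hT
  have Tmul : ∀ a b, T (a * b) = T a ∘ₗ T b := by
    intro a b
    simp only [hT, LinearMap.comp_apply, comul3_mul]
    exact QQ_mul g1 g3 φ g1mul g3mul φmul _ _
  have Tone : T 1 = LinearMap.id := by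
    simp only [hT, LinearMap.comp_apply, comul3_one, QQ_tmul, g1one, g3one, φone]
    rw [show sandL (k := k) (1 : A') 1 = LinearMap.id from LinearMap.ext fun x => by simp]
    exact TensorProduct.map_id
  -- compatibility = linearity
  have hcompat : ∀ π : W →ₗ[k] A' ⊗[k] W,
      (π ∘ₗ indAct k A V B actV = ydRHS k A A' W (comul3 k A) g1 g3 π (indAct k A V B actV)) ↔
      ∀ a x, π (a • x) = T a (π x) := by
    intro π
    constructor
    · intro h a x
      have := LinearMap.congr_fun h (a ⊗ₜ[k] x)
      rw [ydRHS_eq] at this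
      exact this
    · intro h
      refine TensorProduct.ext' fun a x => ?_
      refine (h a x).trans ?_
      exact (ydRHS_eq _ _ _ _ _ _ _).symm
  have hB3 : ∀ b : B, TensorProduct.map B.val.toLinearMap
      (TensorProduct.map B.val.toLinearMap B.val.toLinearMap)
      ((TensorProduct.map LinearMap.id ΔB ∘ₗ ΔB) b) = comul3 k A (b : A) := by
    intro b
    have h1 : Coalgebra.comul (R := k) (b : A) =
      TensorProduct.map B.val.toLinearMap B.val.toLinearMap (ΔB b) :=
      (LinearMap.congr_fun hΔB b).symm
    rw [comul3, LinearMap.comp_apply, LinearMap.comp_apply, h1, TensorProduct.map_map,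
      TensorProduct.map_map, hΔB]
    rfl
  have hVT : ∀ (b : B) (v : V), TensorProduct.map LinearMap.id ι (ρV (actV (b ⊗ₜ v))) =
      T (b : A) (TensorProduct.map LinearMap.id ι (ρV v)) := by
    intro b v
    have h := LinearMap.congr_fun hVcompat (b ⊗ₜ[k] v)
    rw [ydRHS_eq, LinearMap.comp_apply] at h
    rw [h, map_QQ (g3 ∘ₗ Sinv ∘ₗ B.val.toLinearMap) (g3 ∘ₗ B.val.toLinearMap)
      (TensorProduct.curry actV) g1 g3 B.val.toLinearMap B.val.toLinearMap rfl rfl φ B.val.toLinearMap ι ι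
      (fun c => LinearMap.ext fun x => hιB c x), hB3]
    rfl
  -- construction of the coaction
  let P : A ⊗[k] V →ₗ[k] A' ⊗[k] W :=
    TensorProduct.lift ((LinearMap.lcomp k _ (TensorProduct.map LinearMap.id ι ∘ₗ ρV)) ∘ₗ T)
  have P_tmul : ∀ a v, P (a ⊗ₜ v) = T a (TensorProduct.map LinearMap.id ι (ρV v)) :=
    fun a v => rfl
  have P_smul : ∀ a t, P (a • t) = T a (P t) := by
    intro a t
    induction t with
    | zero => simp
    | add s s' hs hs' => rw [smul_add, map_add, map_add, map_add, hs, hs']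
    | tmul b v =>
      rw [TensorProduct.smul_tmul', smul_eq_mul, P_tmul, P_tmul, Tmul, LinearMap.comp_apply]
  have P_ker : ∀ t ∈ indSub k A V B actV, P t = 0 := by
    intro t ht
    refine Submodule.span_induction ?_ ?_ ?_ ?_ ht
    · rintro x ⟨a, b, v, rfl⟩
      rw [map_sub, P_tmul, P_tmul, Tmul, LinearMap.comp_apply, hVT, sub_self]
    · simp
    · intro x y _ _ hx hy
      rw [map_add, hx, hy, add_zero]
    · intro a x _ hx
      rw [P_smul, hx, map_zero]
  let π : W →ₗ[k] A' ⊗[k] W :=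
    ((indSub k A V B actV).restrictScalars k).liftQ P (fun t ht => P_ker t ht)
  have π_mk : ∀ t, π ((indSub k A V B actV).mkQ t) = P t := fun t => rfl
  have π_ι : ∀ v, π (ι v) = TensorProduct.map LinearMap.id ι (ρV v) := by
    intro v
    refine (π_mk _).trans ?_
    change P ((1 : A) ⊗ₜ[k] v) = _
    rw [P_tmul, Tone, LinearMap.id_apply]
  have π_smul : ∀ a x, π (a • x) = T a (π x) := by
    intro a x
    obtain ⟨t, rfl⟩ := Submodule.mkQ_surjective _ x
    rw [← map_smul, π_mk, π_mk, P_smul]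
  refine ⟨⟨fun x => one_smul A x, ?_⟩, π, ⟨⟨?_, ?_⟩, π_ι, (hcompat π).2 π_smul⟩, ?_⟩
  · refine TensorProduct.ext_threefold fun a b x => ?_
    exact mul_smul a b x
  · change _ = DD ∘ₗ π
    apply ind_gen
    intro a v
    have hv := LinearMap.congr_fun hVcomod.1 v
    rw [LinearMap.comp_apply, LinearMap.comp_apply, π_smul, π_ι]
    have e1 : T a (TensorProduct.map LinearMap.id ι (ρV v)) =
      QQ g1 g3 φ (comul3 k A a) (TensorProduct.map LinearMap.id ι (ρV v)) := rfl
    rw [e1, DD_QQ g1 g3 φ g1Δ g3Δ,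
      map_QQ g1 g3 φ g1 g3 LinearMap.id LinearMap.id rfl rfl (QQ g1 g3 φ) (comul3 k A) π π
        (fun c => LinearMap.ext fun x => π_smul c x)]
    have h5 := LinearMap.congr_fun (coassoc5 (k := k) (A := A)) a
    simp only [LinearMap.comp_apply] at h5
    rw [h5]
    congr 1
    have e2 : π ∘ₗ ι = TensorProduct.map LinearMap.id ι ∘ₗ ρV := 
      LinearMap.ext π_ι
    have e3 : ∀ y : A' ⊗[k] V, DD (TensorProduct.map LinearMap.id ι y) =
        TensorProduct.map LinearMap.id (TensorProduct.map LinearMap.id ι) (DD y) := by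
      intro y
      induction y with
      | zero => simp
      | add s s' hs hs' => simp only [map_add, hs, hs']
      | tmul x w =>
        simp only [DD, LinearMap.comp_apply, TensorProduct.map_tmul, LinearMap.id_apply]
        generalize Coalgebra.comul (R := k) x = z
        induction z with
        | zero => simp
        | add s s' hs hs' => simp only [map_add, TensorProduct.add_tmul, hs, hs']
        | tmul x w => simp
    rw [TensorProduct.map_map, e2, e3]
    have e4 : DD (ρV v) = TensorProduct.map LinearMap.id ρV (ρV v) := hv.symm
    rw [e4, TensorProduct.map_map]
  · apply ind_gen
    intro a v
    have hv := LinearMap.congr_fun hVcomod.2 v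
    simp only [LinearMap.comp_apply, LinearMap.id_apply] at hv ⊢
    rw [π_smul, π_ι]
    refine (counit_QQ g1 g3 φ g1ε g3ε a _).trans ?_
    rw [φ_apply]
    congr 1
    rw [TensorProduct.map_map]
    conv_rhs => rw [← hv]
    generalize ρV v = y
    induction y with
    | zero => simp
    | add s s' hs hs' => simp only [map_add, hs, hs']
    | tmul x w =>
      simp
      rfl
  · rintro π' ⟨_, h2, h3⟩
    rw [hcompat] at h3
    apply ind_gen
    intro a v
    rw [h3, π_smul, π_ι, h2]
end
end
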